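/- arXiv:1602.00925 — 4 statements merged into one kernel-verified Lean document; each statement's English description precedes it below -/
import Mathlib

section
/- Fix an integer d ≥ 2. Define S := {(α, α′) ∈ (ℝ/ℤ)² : α ≠ α′ and d·α = d·α′}, and for integers m > n ≥ 1 define S*(m,n) := {(α, α′) ∈ S : dᵐ·α = dⁿ·α and dᵐ·α′ = dⁿ·α′} minus the set of those pairs (α, α′) with d^{m−n}·α = α and d^{m−n}·α′ = α′. Let λ_S be the probability measure on (ℝ/ℤ)² given by λ_S := (1/(d−1)) · Σ_{j=1}^{d−1} (γ_j)_*(λ), where γ_j : ℝ/ℤ → (ℝ/ℤ)² is the map γ_j(α) = (α, α + j/d) and λ is the Haar probability measure on ℝ/ℤ. Then for any sequences (m_k), (n_k) with m_k > n_k ≥ 1 and m_k → ∞, the sets S*(m_k, n_k) are nonempty and finite, and the uniform probability measures on S*(m_k, n_k) converge weakly to λ_S. -/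
open MeasureTheory Filter Topology
open scoped ENNReal

/-- The uniform probability measure on a (nonempty finite) subset `S` of a measurable
space: `(1/Card S) · Σ_{x ∈ S} δ_x`. -/
noncomputable def uniformOn {X : Type*} [MeasurableSpace X] (S : Set X) : Measure X :=
  (Nat.card S : ℝ≥0∞)⁻¹ • Measure.sum (fun x : S => Measure.dirac (x : X))

/-- Weak convergence of a sequence of measures: convergence of integrals of every
bounded continuous real-valued function. -/
def WeakTendsto {X : Type*} [TopologicalSpace X] [MeasurableSpace X]
    (μ : ℕ → Measure X) (ν : Measure X) : Prop :=
  ∀ g : BoundedContinuousFunction X ℝ,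
    Tendsto (fun n => ∫ x, g x ∂(μ n)) atTop (𝓝 (∫ x, g x ∂ν))

/-!
The shear `(x, z) ↦ (x, x + z)` identifies the Misiurewicz pairs with the product of the
`(d ^ m - d ^ n)`-torsion of the circle and the fixed set of its nonzero `d`-torsion points: two
distinct points with the same image under multiplication by `d` are never both periodic, so no pair
is removed. It also carries the product of Haar measure and the uniform measure on the nonzero
`d`-torsion to `λ_S`. So it suffices that the uniform measure on the `N`-torsion converges to Haar
measure as `N → ∞`. Averaging over translations shows that a probability measure invariant under a
`δ`-dense set of translations integrates a continuous function to within its `δ`-oscillation of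
the Haar integral.
-/

section UniformOn

variable {X Y ι : Type*} [MeasurableSpace X] [MeasurableSpace Y]

theorem uniformOn_coe_finset (s : Finset X) :
    uniformOn (s : Set X) = (s.card : ℝ≥0∞)⁻¹ • ∑ x ∈ s, Measure.dirac x := by
  rw [uniformOn, ← Measure.sum_coe_finset, Nat.card_eq_card_toFinset, Finset.toFinset_coe]
  rfl

theorem uniformOn_image_coe_finset {s : Finset ι} {f : ι → X} (hf : Set.InjOn f s) :
    uniformOn (f '' s) = (s.card : ℝ≥0∞)⁻¹ • ∑ i ∈ s, Measure.dirac (f i) := by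
  classical
  rw [← Finset.coe_image, uniformOn_coe_finset, Finset.card_image_of_injOn hf,
    Finset.sum_image hf]

theorem uniformOn_image {S : Set X} {f : X → Y} (hf : Measurable f) (hS : Set.InjOn f S) :
    uniformOn (f '' S) = (uniformOn S).map f := by
  simp only [uniformOn, Measure.map_smul, Measure.map_sum hf.aemeasurable, Measure.map_dirac' hf,
    Nat.card_image_of_injOn hS]
  rw [← Measure.sum_comp_equiv (Equiv.Set.imageOfInjOn f S hS)]
  rfl

theorem uniformOn_prod (S : Set X) {T : Set Y} (hT : T.Countable) :
    uniformOn (S ×ˢ T) = (uniformOn S).prod (uniformOn T) := by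
  have := hT.to_subtype
  have hcard : (Nat.card ↥(S ×ˢ T) : ℝ≥0∞)⁻¹ =
      (Nat.card T : ℝ≥0∞)⁻¹ * (Nat.card S : ℝ≥0∞)⁻¹ := by
    rw [Nat.card_congr (Equiv.Set.prod S T), Nat.card_prod, mul_comm, Nat.cast_mul,
      ENNReal.mul_inv (.inr (ENNReal.natCast_ne_top _)) (.inl (ENNReal.natCast_ne_top _))]
  simp only [uniformOn, Measure.prod_smul_left, Measure.prod_smul_right, Measure.prod_sum,
    Measure.dirac_prod_dirac, smul_smul, hcard]
  rw [← Measure.sum_comp_equiv (Equiv.Set.prod S T)]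
  rfl

theorem isProbabilityMeasure_uniformOn {S : Set X} (hS : S.Finite) (hne : S.Nonempty) :
    IsProbabilityMeasure (uniformOn S) := by
  lift S to Finset X using hS
  refine ⟨?_⟩
  simpa [uniformOn_coe_finset] using
    ENNReal.inv_mul_cancel (by simpa [Finset.nonempty_iff_ne_empty] using hne)
      (ENNReal.natCast_ne_top S.card)

theorem map_add_left_uniformOn_addSubgroup {G : Type*} [AddGroup G] [MeasurableSpace G]
    [MeasurableAdd G] (H : AddSubgroup G) {h : G} (hh : h ∈ H) :
    (uniformOn (H : Set G)).map (h + ·) = uniformOn (H : Set G) := by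
  rw [← uniformOn_image (measurable_const_add h) (add_right_injective h).injOn]
  congr 1
  exact leftAddCoset_mem_leftAddCoset H hh

theorem map_add_left_uniformOn_nsmul_eq_zero {G : Type*} [AddCommGroup G] [MeasurableSpace G]
    [MeasurableAdd G] {N : ℕ} {h : G} (hh : N • h = 0) :
    (uniformOn {x : G | N • x = 0}).map (h + ·) = uniformOn {x : G | N • x = 0} := by
  have hker : {x : G | N • x = 0} = ((nsmulAddMonoidHom N : G →+ G).ker : Set G) := by
    ext x
    simp [AddMonoidHom.mem_ker]
  rw [hker]
  exact map_add_left_uniformOn_addSubgroup _ (by simpa [AddMonoidHom.mem_ker] using hh)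

theorem map_prod_uniformOn_image {Z : Type*} [MeasurableSpace Z] (μ : Measure X) [SFinite μ]
    {F : X × Y → Z} (hF : Measurable F) {s : Finset ι} {f : ι → Y} (hf : Set.InjOn f s) :
    (μ.prod (uniformOn (f '' s))).map F =
      (s.card : ℝ≥0∞)⁻¹ • ∑ i ∈ s, μ.map (fun x => F (x, f i)) := by
  have hcomp (y : Y) : (μ.map (fun x => (x, y))).map F = μ.map (fun x => F (x, y)) :=
    Measure.map_map hF measurable_prodMk_right
  simp only [uniformOn_image_coe_finset hf, ← Measure.sum_coe_finset, Measure.prod_smul_right,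
    Measure.prod_sum_right, Measure.prod_dirac, Measure.map_smul,
    Measure.map_sum hF.aemeasurable, hcomp]

end UniformOn

section WeakConvergence

variable {X Y : Type*} [TopologicalSpace X] [MeasurableSpace X] [TopologicalSpace Y]
  [MeasurableSpace Y]

theorem WeakTendsto.map [OpensMeasurableSpace X] [BorelSpace Y] {μ : ℕ → Measure X}
    {ν : Measure X} (h : WeakTendsto μ ν) {F : X → Y} (hF : Continuous F) :
    WeakTendsto (fun k => (μ k).map F) (ν.map F) := fun g => by
  have integral_map_eq (ρ : Measure X) : ∫ y, g y ∂(ρ.map F) = ∫ x, g (F x) ∂ρ :=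
    integral_map hF.aemeasurable g.continuous.aestronglyMeasurable
  simp only [integral_map_eq]
  exact h (g.compContinuous ⟨F, hF⟩)

theorem WeakTendsto.prod_const [FirstCountableTopology X] [OpensMeasurableSpace X]
    [OpensMeasurableSpace Y] [SecondCountableTopologyEither X Y] {μ : ℕ → Measure X}
    {ν : Measure X} [∀ k, IsFiniteMeasure (μ k)] [IsFiniteMeasure ν] (h : WeakTendsto μ ν)
    (ρ : Measure Y) [IsFiniteMeasure ρ] :
    WeakTendsto (fun k => (μ k).prod ρ) (ν.prod ρ) := fun g => by
  have hcont : Continuous fun x => ∫ y, g (x, y) ∂ρ :=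
    continuous_of_dominated (bound := fun _ => ‖g‖)
      (fun x => (g.continuous.comp (.prodMk_right x)).aestronglyMeasurable)
      (fun x => .of_forall fun y => g.norm_coe_le_norm _) (integrable_const _)
      (.of_forall fun y => g.continuous.comp (.prodMk_left y))
  have hbound (x : X) : ‖∫ y, g (x, y) ∂ρ‖ ≤ ‖g‖ * ρ.real Set.univ :=
    norm_integral_le_of_norm_le_const (.of_forall fun y => g.norm_coe_le_norm _)
  have hfubini (τ : Measure X) [IsFiniteMeasure τ] :
      ∫ p, g p ∂(τ.prod ρ) = ∫ x, ∫ y, g (x, y) ∂ρ ∂τ := integral_prod _ (g.integrable _)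
  simp only [hfubini]
  exact h (.ofNormedAddCommGroup _ hcont _ hbound)

end WeakConvergence

section AlmostInvariant

variable {G : Type*} [SeminormedAddCommGroup G] [MeasurableSpace G] [BorelSpace G]

theorem norm_integral_sub_integral_le_of_map_add_left_eq [SecondCountableTopology G]
    (μ η : Measure G) [IsProbabilityMeasure μ] [μ.IsAddLeftInvariant] [IsProbabilityMeasure η]
    (f : BoundedContinuousFunction G ℝ) {δ ε : ℝ}
    (hη : ∀ x, ∃ h, dist x h < δ ∧ η.map (h + ·) = η)
    (hf : ∀ ⦃x y⦄, dist x y < δ → dist (f x) (f y) ≤ ε) :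
    ‖∫ x, f x ∂η - ∫ x, f x ∂μ‖ ≤ ε := by
  have hprod : Integrable (fun p : G × G => f (p.1 + p.2)) (μ.prod η) :=
    (f.compContinuous ⟨fun p : G × G => p.1 + p.2, continuous_add⟩).integrable _
  have haverage : ∫ x, f x ∂μ = ∫ x, ∫ y, f (x + y) ∂η ∂μ := by
    rw [integral_integral_swap hprod]
    simp only [integral_add_right_eq_self (μ := μ) f, integral_const, probReal_univ, one_smul]
  have hint (x : G) : Integrable (fun y => f (x + y)) η :=
    (f.compContinuous ⟨(x + ·), continuous_const_add x⟩).integrable _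
  have hclose (x : G) : ‖∫ y, f y ∂η - ∫ y, f (x + y) ∂η‖ ≤ ε := by
    obtain ⟨h, hxh, hinv⟩ := hη x
    have htranslate : ∫ y, f y ∂η = ∫ y, f (h + y) ∂η := by
      conv_lhs => rw [← hinv]
      exact integral_map (by fun_prop) f.continuous.aestronglyMeasurable
    rw [htranslate, ← integral_sub (hint h) (hint x)]
    simpa using norm_integral_le_of_norm_le_const (μ := η) (.of_forall fun y =>
      (dist_eq_norm (f (h + y)) (f (x + y))).ge.trans
        (hf (by rwa [dist_add_right, dist_comm])))
  calc ‖∫ y, f y ∂η - ∫ x, f x ∂μ‖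
      = ‖∫ x, (∫ y, f y ∂η - ∫ y, f (x + y) ∂η) ∂μ‖ := by
        rw [haverage, integral_sub (integrable_const _) hprod.integral_prod_left, integral_const,
          probReal_univ, one_smul]
    _ ≤ ε := by simpa using norm_integral_le_of_norm_le_const (μ := μ) (.of_forall hclose)

theorem weakTendsto_of_map_add_left_eq [CompactSpace G] {η : ℕ → Measure G}
    (μ : Measure G) [IsProbabilityMeasure μ] [μ.IsAddLeftInvariant]
    (hprob : ∀ᶠ k in atTop, IsProbabilityMeasure (η k))
    (hη : ∀ δ > 0, ∀ᶠ k in atTop, ∀ x, ∃ h, dist x h < δ ∧ (η k).map (h + ·) = η k) :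
    WeakTendsto η μ := fun f => by
  refine Metric.tendsto_nhds.2 fun ε hε => ?_
  obtain ⟨δ, hδ, hfδ⟩ := Metric.uniformContinuous_iff.1
    (CompactSpace.uniformContinuous_of_continuous f.continuous) (ε / 2) (half_pos hε)
  filter_upwards [hprob, hη δ hδ] with k _ hk
  exact (norm_integral_sub_integral_le_of_map_add_left_eq μ (η k) f hk
    fun x y h => (hfδ h).le).trans_lt (half_lt_self hε)

end AlmostInvariant

section AddCircle

variable {p : ℝ} [hp : Fact (0 < p)]

theorem exists_nsmul_eq_zero_and_dist_le {N : ℕ} (hN : 0 < N) (x : AddCircle p) :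
    ∃ h : AddCircle p, N • h = 0 ∧ dist x h ≤ p / N / 2 := by
  induction x using QuotientAddGroup.induction_on with | _ t
  have hN' : (0 : ℝ) < N := Nat.cast_pos.2 hN
  have hp0 : 0 < p := hp.out
  set r : ℤ := round (t * N / p)
  refine ⟨((r / N * p : ℝ) : AddCircle p), ?_, ?_⟩
  · rw [← AddCircle.coe_nsmul, nsmul_eq_mul, ← mul_assoc, mul_div_cancel₀ _ hN'.ne',
      ← zsmul_eq_mul, AddCircle.coe_zsmul, AddCircle.coe_period, smul_zero]
  · calc dist (t : AddCircle p) ((r / N * p : ℝ) : AddCircle p)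
        ≤ |t - r / N * p| := by
          rw [dist_eq_norm, ← AddCircle.coe_sub]
          exact QuotientAddGroup.norm_mk_le_norm
      _ = |t * N / p - r| * (p / N) := by
          rw [← abs_of_pos (div_pos hp0 hN'), ← abs_mul]
          congr 1
          field_simp
      _ ≤ 1 / 2 * (p / N) := by gcongr; exact abs_sub_round _
      _ = p / N / 2 := by ring

theorem weakTendsto_uniformOn_nsmul_eq_zero (μ : Measure (AddCircle p))
    [IsProbabilityMeasure μ] [μ.IsAddLeftInvariant] {N : ℕ → ℕ} (hN : Tendsto N atTop atTop) :
    WeakTendsto (fun k => uniformOn {x : AddCircle p | N k • x = 0}) μ := by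
  have hpos : ∀ᶠ k in atTop, 0 < N k := hN.eventually_gt_atTop 0
  have hmesh : Tendsto (fun k => p / N k / 2) atTop (𝓝 0) := by
    simpa using ((tendsto_natCast_atTop_atTop.comp hN).const_div_atTop p).div_const 2
  refine weakTendsto_of_map_add_left_eq μ (hpos.mono fun k hk =>
    isProbabilityMeasure_uniformOn (AddCircle.finite_torsion p hk) ⟨0, smul_zero _⟩) fun δ hδ => ?_
  filter_upwards [hpos, hmesh.eventually_lt_const hδ] with k hk hkδ x
  obtain ⟨h, hh, hxh⟩ := exists_nsmul_eq_zero_and_dist_le hk x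
  exact ⟨h, hxh.trans_lt hkδ, map_add_left_uniformOn_nsmul_eq_zero hh⟩

theorem injOn_coe_div_mul_period (N : ℕ) :
    Set.InjOn (fun i : ℕ => ((i / N * p : ℝ) : AddCircle p)) (Set.Iio N) := by
  have hp0 : 0 < p := hp.out
  have mem_fundamentalDomain {i : ℕ} (hi : i < N) : (i / N * p : ℝ) ∈ Set.Ico 0 (0 + p) := by
    have hN : (0 : ℝ) < N := Nat.cast_pos.2 (i.zero_le.trans_lt hi)
    have hlt : (i / N : ℝ) < 1 := (div_lt_one hN).2 (Nat.cast_lt.2 hi)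
    exact ⟨by positivity, by nlinarith⟩
  intro i hi j hj h
  have hN : (N : ℝ) ≠ 0 := Nat.cast_ne_zero.2 (i.zero_le.trans_lt hi).ne'
  have heq := (AddCircle.coe_eq_coe_iff_of_mem_Ico (mem_fundamentalDomain hi)
    (mem_fundamentalDomain hj)).1 h
  exact Nat.cast_injective ((div_left_inj' hN).1 (mul_right_cancel₀ hp0.ne' heq))

end AddCircle

section NonzeroTorsion

/-- The nonzero elements killed by `d`: the possible differences of two distinct points with the
same image under multiplication by `d`. -/
def nonzeroTorsion (G : Type*) [AddCommGroup G] (d : ℕ) : Set G :=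
  {z | d • z = 0 ∧ z ≠ 0}

theorem nonzeroTorsion_addCircle_finite (p : ℝ) {d : ℕ} (hd : 0 < d) :
    (nonzeroTorsion (AddCircle p) d).Finite :=
  (AddCircle.finite_torsion p hd).subset fun _ hz => hz.1

variable {p : ℝ} [Fact (0 < p)] {d : ℕ}

theorem nonzeroTorsion_addCircle_eq_image (hd : 0 < d) :
    nonzeroTorsion (AddCircle p) d =
      (fun j : ℕ => ((j / d * p : ℝ) : AddCircle p)) '' Finset.Icc 1 (d - 1) := by
  have coe_div_ne_zero {j : ℕ} (hj : j < d) : ((j / d * p : ℝ) : AddCircle p) ≠ 0 ↔ j ≠ 0 := by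
    simpa using ((injOn_coe_div_mul_period (p := p) d).eq_iff hj hd).not
  ext z
  simp only [nonzeroTorsion, Set.mem_ofPred_eq, AddCircle.nsmul_eq_zero_iff hd, Set.mem_image,
    Finset.mem_coe, Finset.mem_Icc]
  constructor
  · rintro ⟨⟨j, hj, rfl⟩, hz⟩
    have := (coe_div_ne_zero hj).1 hz
    exact ⟨j, by omega, rfl⟩
  · rintro ⟨j, hj, rfl⟩
    exact ⟨⟨j, by omega, rfl⟩, (coe_div_ne_zero (by omega)).2 (by omega)⟩

theorem nonzeroTorsion_addCircle_nonempty (hd : 2 ≤ d) :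
    (nonzeroTorsion (AddCircle p) d).Nonempty := by
  rw [nonzeroTorsion_addCircle_eq_image (by omega)]
  exact (Finset.coe_nonempty.2 (Finset.nonempty_Icc.2 (by omega))).image _

theorem map_shear_prod_uniformOn_nonzeroTorsion (μ : Measure (AddCircle p)) [SFinite μ]
    (hd : 0 < d) :
    (μ.prod (uniformOn (nonzeroTorsion (AddCircle p) d))).map (fun q => (q.1, q.1 + q.2)) =
      ((d : ℝ≥0∞) - 1)⁻¹ • ∑ j ∈ Finset.Icc 1 (d - 1),
        μ.map fun α => (α, α + ((j / d * p : ℝ) : AddCircle p)) := by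
  have hsub : (Finset.Icc 1 (d - 1) : Set ℕ) ⊆ Set.Iio d := fun j hj => by
    have := Finset.mem_Icc.1 hj
    exact Set.mem_Iio.2 (by omega)
  rw [nonzeroTorsion_addCircle_eq_image hd,
    map_prod_uniformOn_image μ (by fun_prop) ((injOn_coe_div_mul_period d).mono hsub)]
  simp

end NonzeroTorsion

section MisiurewiczPairs

/-- The Misiurewicz pairs `S*(m, n)` of multiplication by `d` on a commutative group: two distinct
points with the same image, both satisfying `d ^ m • x = d ^ n • x`, and not both of period
`m - n`. -/
def misiurewiczPairs (G : Type*) [AddCommGroup G] (d m n : ℕ) : Set (G × G) :=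
  {p | (p.1 ≠ p.2 ∧ d • p.1 = d • p.2) ∧
      (d ^ m • p.1 = d ^ n • p.1 ∧ d ^ m • p.2 = d ^ n • p.2)} \
    {p | d ^ (m - n) • p.1 = p.1 ∧ d ^ (m - n) • p.2 = p.2}

theorem pow_nsmul_congr {M : Type*} [AddMonoid M] {d l : ℕ} (hl : l ≠ 0) {x y : M}
    (h : d • x = d • y) : d ^ l • x = d ^ l • y := by
  obtain ⟨l, rfl⟩ := Nat.exists_eq_succ_of_ne_zero hl
  rw [pow_succ, mul_nsmul', mul_nsmul', h]

theorem misiurewiczPairs_eq_image_shear {G : Type*} [AddCommGroup G] {d m n : ℕ} (hd : 0 < d)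
    (hn : n ≠ 0) (hnm : n < m) :
    misiurewiczPairs G d m n = (fun q : G × G => (q.1, q.1 + q.2)) ''
      ({x | (d ^ m - d ^ n) • x = 0} ×ˢ nonzeroTorsion G d) := by
  have preperiodic_iff (x : G) : (d ^ m - d ^ n) • x = 0 ↔ d ^ m • x = d ^ n • x := by
    rw [sub_nsmul _ (Nat.pow_le_pow_right hd hnm.le), ← sub_eq_add_neg, sub_eq_zero]
  ext ⟨x, y⟩
  simp only [misiurewiczPairs, nonzeroTorsion, Set.mem_sdiff, Set.mem_ofPred_eq,
    Set.mem_image, Set.mem_prod, Prod.exists, Prod.mk.injEq, preperiodic_iff]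
  constructor
  · rintro ⟨⟨⟨hne, hxy⟩, hx, -⟩, -⟩
    exact ⟨x, y - x, ⟨hx, by rw [nsmul_sub, hxy, sub_self], sub_ne_zero.2 hne.symm⟩, rfl,
      add_sub_cancel x y⟩
  · rintro ⟨x, z, ⟨hx, hz, hz0⟩, rfl, rfl⟩
    have hne : x ≠ x + z := by simpa using hz0
    have hxy : d • x = d • (x + z) := by rw [nsmul_add, hz, add_zero]
    have hy : d ^ m • (x + z) = d ^ n • (x + z) := by
      rw [← pow_nsmul_congr hn hxy, ← pow_nsmul_congr (by omega) hxy, hx]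
    refine ⟨⟨⟨hne, hxy⟩, hx, hy⟩, fun ⟨hxper, hyper⟩ => hne ?_⟩
    exact hxper.symm.trans ((pow_nsmul_congr (by omega) hxy).trans hyper)

theorem uniformOn_misiurewiczPairs {G : Type*} [AddCommGroup G] [MeasurableSpace G]
    [MeasurableAdd₂ G] {d m n : ℕ} (hd : 0 < d) (hn : n ≠ 0) (hnm : n < m)
    (hcount : (nonzeroTorsion G d).Countable) :
    uniformOn (misiurewiczPairs G d m n) =
      ((uniformOn {x : G | (d ^ m - d ^ n) • x = 0}).prod (uniformOn (nonzeroTorsion G d))).map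
        fun q => (q.1, q.1 + q.2) := by
  have shear_injective : Function.Injective fun q : G × G => (q.1, q.1 + q.2) :=
    (Equiv.prodShear (.refl G) fun x => .addLeft x).injective
  rw [misiurewiczPairs_eq_image_shear hd hn hnm,
    uniformOn_image (by fun_prop) shear_injective.injOn, uniformOn_prod _ hcount]

theorem tendsto_pow_sub_pow_atTop {α : Type*} {l : Filter α} {d : ℕ} (hd : 2 ≤ d) {m n : α → ℕ}
    (hnm : ∀ k, n k < m k) (hm : Tendsto m l atTop) :
    Tendsto (fun k => d ^ m k - d ^ n k) l atTop := by
  refine tendsto_atTop_mono (fun k => ?_) hm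
  obtain ⟨i, hi⟩ : ∃ i, m k = i + 1 := Nat.exists_eq_succ_of_ne_zero (hnm k).ne_bot
  have hle : d ^ n k ≤ d ^ i := Nat.pow_le_pow_right (by omega) (by have := hnm k; omega)
  have hlt : i < d ^ i := Nat.lt_pow_self hd
  calc m k ≤ 2 * d ^ i - d ^ i := by omega
    _ ≤ d ^ m k - d ^ n k := by rw [hi, pow_succ']; gcongr

variable (p : ℝ) {d : ℕ}

theorem misiurewiczPairs_addCircle_finite {m n : ℕ} (hd : 2 ≤ d) (hn : n ≠ 0) (hnm : n < m) :
    (misiurewiczPairs (AddCircle p) d m n).Finite := by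
  have hN : 0 < d ^ m - d ^ n := Nat.sub_pos_of_lt (Nat.pow_lt_pow_right hd hnm)
  rw [misiurewiczPairs_eq_image_shear (by omega) hn hnm]
  exact ((AddCircle.finite_torsion p hN).prod
    (nonzeroTorsion_addCircle_finite p (by omega))).image _

theorem misiurewiczPairs_addCircle_nonempty [Fact (0 < p)] {m n : ℕ} (hd : 2 ≤ d) (hn : n ≠ 0)
    (hnm : n < m) : (misiurewiczPairs (AddCircle p) d m n).Nonempty := by
  rw [misiurewiczPairs_eq_image_shear (by omega) hn hnm]
  have hne : {x : AddCircle p | (d ^ m - d ^ n) • x = 0}.Nonempty := ⟨0, nsmul_zero _⟩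
  exact (hne.prod (nonzeroTorsion_addCircle_nonempty hd)).image _

theorem weakTendsto_uniformOn_misiurewiczPairs {p : ℝ} [Fact (0 < p)] (μ : Measure (AddCircle p))
    [IsProbabilityMeasure μ] [μ.IsAddLeftInvariant] (hd : 2 ≤ d) {m n : ℕ → ℕ}
    (hn : ∀ k, n k ≠ 0) (hnm : ∀ k, n k < m k) (hm : Tendsto m atTop atTop) :
    WeakTendsto (fun k => uniformOn (misiurewiczPairs (AddCircle p) d (m k) (n k)))
      ((μ.prod (uniformOn (nonzeroTorsion (AddCircle p) d))).map fun q => (q.1, q.1 + q.2)) := by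
  have hfinite := nonzeroTorsion_addCircle_finite p (d := d) (by omega)
  have := isProbabilityMeasure_uniformOn hfinite (nonzeroTorsion_addCircle_nonempty hd)
  have (k : ℕ) : IsProbabilityMeasure
      (uniformOn {x : AddCircle p | (d ^ m k - d ^ n k) • x = 0}) :=
    isProbabilityMeasure_uniformOn (AddCircle.finite_torsion p
      (Nat.sub_pos_of_lt (Nat.pow_lt_pow_right hd (hnm k)))) ⟨0, smul_zero _⟩
  have htorsion := weakTendsto_uniformOn_nsmul_eq_zero μ (tendsto_pow_sub_pow_atTop hd hnm hm)
  simpa only [uniformOn_misiurewiczPairs (by omega : 0 < d) (hn _) (hnm _) hfinite.countable]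
    using (htorsion.prod_const _).map (by fun_prop)

end MisiurewiczPairs

/-- For `d ≥ 2`, the sets `S*(m_k, n_k)` of Misiurewicz pairs are nonempty and finite,
and the uniform probability measures on them converge weakly to the natural measure
`λ_S = (1/(d−1)) Σ_{j=1}^{d−1} (γ_j)_* λ`, where `γ_j(α) = (α, α + j/d)`. -/
theorem misiurewicz_pairs_equidistribute (d : ℕ) (hd : 2 ≤ d)
    (m n : ℕ → ℕ) (hn : ∀ k, 1 ≤ n k) (hnm : ∀ k, n k < m k)
    (hm : Tendsto m atTop atTop)
    (Sstar : ℕ → Set (UnitAddCircle × UnitAddCircle))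
    (hSstar : ∀ k, Sstar k =
      {p : UnitAddCircle × UnitAddCircle |
          (p.1 ≠ p.2 ∧ d • p.1 = d • p.2) ∧
          ((d ^ m k) • p.1 = (d ^ n k) • p.1 ∧ (d ^ m k) • p.2 = (d ^ n k) • p.2)} \
        {p : UnitAddCircle × UnitAddCircle |
          (d ^ (m k - n k)) • p.1 = p.1 ∧ (d ^ (m k - n k)) • p.2 = p.2})
    (lamS : Measure (UnitAddCircle × UnitAddCircle))
    (hlamS : lamS = ((d : ℝ≥0∞) - 1)⁻¹ •
      ∑ j ∈ Finset.Icc 1 (d - 1),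
        Measure.map
          (fun α : UnitAddCircle => (α, α + (((j : ℝ) / (d : ℝ) : ℝ) : UnitAddCircle)))
          (volume : Measure UnitAddCircle)) :
    (∀ k, (Sstar k).Finite ∧ (Sstar k).Nonempty) ∧
      WeakTendsto (fun k => uniformOn (Sstar k)) lamS := by
  have : IsProbabilityMeasure (volume : Measure UnitAddCircle) := ⟨UnitAddCircle.measure_univ⟩
  have hlamS_eq : lamS = (volume.prod (uniformOn (nonzeroTorsion UnitAddCircle d))).map
      fun q => (q.1, q.1 + q.2) := by
    rw [hlamS]
    simpa only [mul_one] using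
      (map_shear_prod_uniformOn_nonzeroTorsion (p := 1) volume (by omega : 0 < d)).symm
  obtain rfl : Sstar = fun k => misiurewiczPairs UnitAddCircle d (m k) (n k) := funext hSstar
  have hn0 (k : ℕ) : n k ≠ 0 := Nat.one_le_iff_ne_zero.1 (hn k)
  refine ⟨fun k => ⟨misiurewiczPairs_addCircle_finite 1 hd (hn0 k) (hnm k),
    misiurewiczPairs_addCircle_nonempty 1 hd (hn0 k) (hnm k)⟩, ?_⟩
  rw [hlamS_eq]
  exact weakTendsto_uniformOn_misiurewiczPairs (p := 1) volume hd hn0 hnm hm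
end

section
/- For all integers n > k ≥ 1, the set X(n,k) := {θ ∈ ℝ/ℤ : (−2)^{n−1}·θ = (−2)^{k−1}·θ and (−2)^{n−k}·θ ≠ θ} is finite, and its cardinality d(n,k) equals 2^{n−1} − 2^{k−1} − 2^{n−k} + 1 if n − k is even, and equals 2^{n−1} + 2^{k−1} − 2^{n−k} − 1 if n − k is odd. -/
/-! Replace `-2` by any integer `b ≠ 0`. With `q = b ^ d - 1`, the condition
`b ^ (l + d) • u = b ^ l • u` says that `u` is `b ^ l * q`-torsion, and `b ^ d • u = u` says that it
is `q`-torsion. So the points in question form a difference of two nested torsion subgroups of the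
circle, of orders `|b| ^ l * |q|` and `|q|` when `q ≠ 0`. For `b = -2` the parity of the period `d`
decides the sign of `q`. -/

section Torsion

variable {𝕜 : Type*} [Field 𝕜] [LinearOrder 𝕜] [IsStrictOrderedRing 𝕜] (p : 𝕜) [Fact (0 < p)]

theorem encard_addCircle_nsmul_eq_zero {n : ℕ} (hn : n ≠ 0) :
    {u : AddCircle p | n • u = 0}.encard = n := by
  have hreg : IsSMulRegular 𝕜 n := .of_right_eq_zero_of_smul fun x hx ↦ by simpa [hn] using hx
  refine (AddCircle.card_torsion_le_of_isSMulRegular p n hn hreg).antisymm ?_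
  let u : AddCircle p := (p / n : 𝕜)
  have hu : addOrderOf u = n := AddCircle.addOrderOf_period_div hn.pos
  have hsub : (AddSubgroup.zmultiples u : Set (AddCircle p)) ⊆ {u | n • u = 0} := fun v hv ↦
    addOrderOf_dvd_iff_nsmul_eq_zero.mp (hu ▸ addOrderOf_dvd_of_mem_zmultiples hv)
  calc (n : ℕ∞) = (AddSubgroup.zmultiples u : Set (AddCircle p)).encard := by
        have : Finite (AddSubgroup.zmultiples u) :=
          Nat.finite_of_card_ne_zero (by rwa [Nat.card_zmultiples, hu])
        rw [← Set.Finite.cast_ncard_eq (Set.toFinite _), ← Nat.card_coe_set_eq,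
          SetLike.coe_sort_coe, Nat.card_zmultiples, hu]
    _ ≤ {u : AddCircle p | n • u = 0}.encard := Set.encard_le_encard hsub

theorem encard_addCircle_zsmul_eq_zero {m : ℤ} (hm : m ≠ 0) :
    {u : AddCircle p | m • u = 0}.encard = m.natAbs := by
  simpa only [natAbs_nsmul_eq_zero] using
    encard_addCircle_nsmul_eq_zero p (Int.natAbs_ne_zero.mpr hm)

theorem finite_addCircle_zsmul_eq_zero {m : ℤ} (hm : m ≠ 0) :
    {u : AddCircle p | m • u = 0}.Finite :=
  Set.finite_of_encard_eq_coe (encard_addCircle_zsmul_eq_zero p hm)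

theorem ncard_addCircle_zsmul_eq_zero {m : ℤ} (hm : m ≠ 0) :
    ({u : AddCircle p | m • u = 0}.ncard : ℤ) = |m| := by
  rw [Set.ncard_def, encard_addCircle_zsmul_eq_zero p hm, ENat.toNat_natCast, Int.natCast_natAbs]

theorem setOfPred_zsmul_eq_zero_subset_mul {G : Type*} [AddGroup G] (a q : ℤ) :
    {u : G | q • u = 0} ⊆ {u | (a * q) • u = 0} := fun u (hu : q • u = 0) ↦
  show (a * q) • u = 0 by rw [mul_zsmul, hu, zsmul_zero]

theorem finite_addCircle_mul_zsmul_eq_zero_sdiff {a : ℤ} (ha : a ≠ 0) (q : ℤ) :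
    ({u : AddCircle p | (a * q) • u = 0} \ {u | q • u = 0}).Finite := by
  obtain rfl | hq := eq_or_ne q 0
  · simp
  · exact (finite_addCircle_zsmul_eq_zero p (mul_ne_zero ha hq)).sdiff

theorem ncard_addCircle_mul_zsmul_eq_zero_sdiff {a : ℤ} (ha : a ≠ 0) (q : ℤ) :
    (({u : AddCircle p | (a * q) • u = 0} \ {u | q • u = 0}).ncard : ℤ) = (|a| - 1) * |q| := by
  obtain rfl | hq := eq_or_ne q 0
  · simp
  have haq : a * q ≠ 0 := mul_ne_zero ha hq
  have hcard := Set.ncard_sdiff_add_ncard_of_subset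
    (setOfPred_zsmul_eq_zero_subset_mul a q) (finite_addCircle_zsmul_eq_zero p haq)
  zify at hcard
  rw [ncard_addCircle_zsmul_eq_zero p hq, ncard_addCircle_zsmul_eq_zero p haq, abs_mul] at hcard
  linarith

end Torsion

theorem setOfPred_zsmul_pow_preperiodic_eq_sdiff {G : Type*} [AddGroup G] (b : ℤ) (l d : ℕ) :
    {u : G | b ^ (l + d) • u = b ^ l • u ∧ b ^ d • u ≠ u} =
      {u | (b ^ l * (b ^ d - 1)) • u = 0} \ {u | (b ^ d - 1) • u = 0} := by
  ext u
  simp only [Set.mem_ofPred_eq, Set.mem_sdiff, mul_sub, mul_one, ← pow_add, sub_zsmul, one_zsmul,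
    add_neg_eq_zero, ne_eq]

theorem abs_neg_pow_sub_one {R : Type*} [CommRing R] [LinearOrder R] [IsStrictOrderedRing R]
    {b : R} (hb : 1 ≤ b) (d : ℕ) :
    |(-b) ^ d - 1| = if Even d then b ^ d - 1 else b ^ d + 1 := by
  have hpow : 1 ≤ b ^ d := one_le_pow₀ hb
  split_ifs with hd
  · rw [hd.neg_pow, abs_of_nonneg (by linarith)]
  · rw [(Nat.not_even_iff_odd.mp hd).neg_pow, abs_of_neg (by linarith)]
    ring

theorem pow_sub_one_mul_abs_neg_pow_sub_one {R : Type*} [CommRing R] [LinearOrder R]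
    [IsStrictOrderedRing R] {b : R} (hb : 1 ≤ b) (l d : ℕ) :
    (b ^ l - 1) * |(-b) ^ d - 1| =
      if Even d then b ^ (l + d) - b ^ l - b ^ d + 1 else b ^ (l + d) + b ^ l - b ^ d - 1 := by
  rw [abs_neg_pow_sub_one hb]
  split_ifs <;> ring

theorem card_antiholomorphic_misiurewicz_angles_general {𝕜 : Type*} [Field 𝕜] [LinearOrder 𝕜]
    [IsStrictOrderedRing 𝕜] (p : 𝕜) [Fact (0 < p)] {b : ℤ} (hb : b ≠ 0) (l d : ℕ) :
    {u : AddCircle p | b ^ (l + d) • u = b ^ l • u ∧ b ^ d • u ≠ u}.Finite ∧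
      ({u : AddCircle p | b ^ (l + d) • u = b ^ l • u ∧ b ^ d • u ≠ u}.ncard : ℤ) =
        (|b| ^ l - 1) * |b ^ d - 1| := by
  rw [setOfPred_zsmul_pow_preperiodic_eq_sdiff, ← abs_pow]
  exact ⟨finite_addCircle_mul_zsmul_eq_zero_sdiff p (pow_ne_zero l hb) _,
    ncard_addCircle_mul_zsmul_eq_zero_sdiff p (pow_ne_zero l hb) _⟩

/-- For integers `n > k ≥ 1`, the set of Misiurewicz combinatorics
`X(n,k) = {θ ∈ ℝ/ℤ : (−2)^(n−1)·θ = (−2)^(k−1)·θ, (−2)^(n−k)·θ ≠ θ}` is finite, with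
cardinality `2^(n−1) − 2^(k−1) − 2^(n−k) + 1` if `n − k` is even and
`2^(n−1) + 2^(k−1) − 2^(n−k) − 1` if `n − k` is odd. -/
theorem card_antiholomorphic_misiurewicz_angles (n k : ℕ) (hk : 1 ≤ k) (hkn : k < n)
    (X : Set UnitAddCircle)
    (hX : X = {θ : UnitAddCircle |
        ((-2 : ℤ) ^ (n - 1)) • θ = ((-2 : ℤ) ^ (k - 1)) • θ ∧
          ((-2 : ℤ) ^ (n - k)) • θ ≠ θ}) :
    X.Finite ∧
      (Nat.card X : ℤ) =
        if Even (n - k) then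
          2 ^ (n - 1) - 2 ^ (k - 1) - 2 ^ (n - k) + 1
        else
          2 ^ (n - 1) + 2 ^ (k - 1) - 2 ^ (n - k) - 1 := by
  have hexp : k - 1 + (n - k) = n - 1 := by omega
  simpa only [hX, Nat.card_coe_set_eq, hexp, abs_neg, abs_two,
    pow_sub_one_mul_abs_neg_pow_sub_one one_le_two] using
    card_antiholomorphic_misiurewicz_angles_general (1 : ℝ) (b := -2) (by decide) (k - 1) (n - k)
end

section
/- For c ∈ ℂ, let f_c : ℂ → ℂ be the anti-holomorphic quadratic map f_c(z) = (conj z)² + c, where conj denotes complex conjugation. For all integers n > k > 0, the set Per(n,k) := {c ∈ ℂ : f_c^{∘n}(0) = f_c^{∘k}(0)} is finite; in particular its subset Per*(n,k) := {c ∈ Per(n,k) : f_c^{∘(n−k)}(0) ≠ 0} is finite. -/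
/-!
Write `σ` for complex conjugation. Together with `f_c^[m](0)` consider its image under `σ`: both
are polynomials in `x = c` and `x' = σ c`, treated as independent variables, and the `(m + 1)`-st
pair arises from the `m`-th by squaring, swapping and adding `(x, x')`. By induction the leading
monomials of the `m`-th pair, in a graded order, are pure powers of `x` and of `x'`, of degree
`2 ^ (m - 1)`. Since this degree grows with `m`, the two polynomial equations expressing
`f_c^[n](0) = f_c^[k](0)` and its conjugate still have pure powers of `x` and `x'` as leading
monomials, and a polynomial system whose leading monomials contain a power of every variable has
only finitely many solutions. The same argument applies to any automorphism `σ` of finite order of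
an integral domain, with one variable for every power of `σ`.
-/

open MvPolynomial MonomialOrder

open scoped MonomialOrder

section ZeroLocus

variable {ι R : Type*} [Finite ι] [CommRing R]

lemma finite_quotient_span_of_degree_eq_single (m : MonomialOrder ι) {P : ι → MvPolynomial ι R}
    {N : ι → ℕ} (hunit : ∀ i, IsUnit (m.leadingCoeff (P i)))
    (hdeg : ∀ i, m.degree (P i) = Finsupp.single i (N i)) :
    Module.Finite R (MvPolynomial ι R ⧸ Ideal.span (Set.range P)) := by
  classical
  set I := Ideal.span (Set.range P)
  let box : Set (ι →₀ ℕ) := {c | ∀ i, c i < N i}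
  have box_finite : box.Finite :=
    (Set.finite_Iic (Finsupp.equivFunOnFinite.symm N)).subset fun c hc i => (hc i).le
  have : Finite box := box_finite
  have : Module.Finite R (restrictSupport R box) := .of_basis (basisRestrictSupport R box)
  refine .of_surjective ((Ideal.Quotient.mkₐ R I).toLinearMap ∘ₗ (restrictSupport R box).subtype)
    fun q => ?_
  obtain ⟨p, rfl⟩ := Ideal.Quotient.mk_surjective q
  obtain ⟨g, r, hp, -, hr⟩ := m.div hunit p
  have r_mem : r ∈ restrictSupport R box := fun c hc i => by
    simpa [hdeg] using hr c hc i
  have sub_mem : r - p ∈ I := by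
    rw [hp, sub_add_cancel_right, neg_mem_iff]
    exact (Finsupp.mem_ideal_span_range_iff_exists_finsupp).mpr ⟨g, rfl⟩
  exact ⟨⟨r, r_mem⟩, Ideal.Quotient.eq.mpr sub_mem⟩

lemma finite_setOf_eval_eq_zero_of_finite_quotient [IsDomain R] (I : Ideal (MvPolynomial ι R))
    [Module.Finite R (MvPolynomial ι R ⧸ I)] :
    {x : ι → R | ∀ p ∈ I, eval x p = 0}.Finite := by
  have coordinate (i : ι) : ∃ q : Polynomial R, q.Monic ∧ Polynomial.aeval (X i) q ∈ I := by
    obtain ⟨q, hq, hq0⟩ := IsIntegral.of_finite R (Ideal.Quotient.mkₐ R I (X i))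
    refine ⟨q, hq, Ideal.Quotient.eq_zero_iff_mem.mp ?_⟩
    rwa [← Polynomial.aeval_def, Polynomial.aeval_algHom_apply] at hq0
  choose q hq hqI using coordinate
  refine (Set.Finite.pi' fun i => (q i).rootSet_finite R).subset fun x hx i => ?_
  rw [Polynomial.mem_rootSet]
  refine ⟨(hq i).ne_zero, ?_⟩
  have := hx _ (hqI i)
  rwa [← coe_aeval_eq_eval, RingHom.coe_coe, ← Polynomial.aeval_algHom_apply, aeval_X] at this

theorem finite_setOf_eval_eq_zero_of_degree_eq_single [IsDomain R] (m : MonomialOrder ι)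
    {P : ι → MvPolynomial ι R} {N : ι → ℕ} (hunit : ∀ i, IsUnit (m.leadingCoeff (P i)))
    (hdeg : ∀ i, m.degree (P i) = Finsupp.single i (N i)) :
    {x : ι → R | ∀ i, eval x (P i) = 0}.Finite := by
  have := finite_quotient_span_of_degree_eq_single m hunit hdeg
  refine (finite_setOf_eval_eq_zero_of_finite_quotient (Ideal.span (Set.range P))).subset
    fun x hx p hp => ?_
  have span_le : Ideal.span (Set.range P) ≤ RingHom.ker (eval x) :=
    Ideal.span_le.mpr (Set.range_subset_iff.mpr hx)
  exact span_le hp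

end ZeroLocus

section OrbitPoly

variable {ι R : Type*} [CommRing R]

/-- The `m`-th iterate of the coupled system `z i ↦ z (e i) ^ d + X i` with starting values `a i`,
as a polynomial in the parameters `X i`. -/
noncomputable def orbitPoly (d : ℕ) (e : ι → ι) (a : ι → R) : ℕ → ι → MvPolynomial ι R
  | 0, i => C (a i)
  | m + 1, i => orbitPoly d e a m (e i) ^ d + X i

lemma degLex_lt_of_degree_lt [LinearOrder ι] [WellFoundedGT ι] {a b : ι →₀ ℕ}
    (h : a.degree < b.degree) : a ≺[degLex] b :=
  degLex_lt_iff.mpr (Finsupp.DegLex.lt_iff.mpr (Or.inl h))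

variable [IsDomain R] [LinearOrder ι] [WellFoundedGT ι] {d : ℕ}

lemma degree_orbitPoly_succ_and_monic (hd : 1 < d) (e : ι → ι) (a : ι → R) (m : ℕ) (i : ι) :
    degLex.degree (orbitPoly d e a (m + 1) i) = Finsupp.single (e^[m] i) (d ^ m) ∧
      degLex.Monic (orbitPoly d e a (m + 1) i) := by
  induction m generalizing i with
  | zero =>
    have h : degLex.degree (C (a (e i)) ^ d) ≺[degLex] degLex.degree (X i : MvPolynomial ι R) := by
      rw [← C_pow, degree_C, degree_X]
      exact degLex_lt_of_degree_lt (by simp)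
    simp only [orbitPoly, add_comm _ (X i : MvPolynomial ι R)]
    exact ⟨by rw [degree_add_of_lt h, degree_X]; simp, monic_X.add_of_lt h⟩
  | succ m ih =>
    obtain ⟨hdeg, hmonic⟩ := ih (e i)
    have hpow : degLex.degree (orbitPoly d e a (m + 1) (e i) ^ d) =
        Finsupp.single (e^[m + 1] i) (d ^ (m + 1)) := by
      rw [degree_pow, hdeg, Finsupp.smul_single, smul_eq_mul, pow_succ',
        Function.iterate_succ_apply]
    have h : degLex.degree (X i : MvPolynomial ι R) ≺[degLex]
        degLex.degree (orbitPoly d e a (m + 1) (e i) ^ d) := by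
      rw [hpow, degree_X]
      exact degLex_lt_of_degree_lt (by simpa using Nat.one_lt_pow m.succ_ne_zero hd)
    rw [orbitPoly]
    exact ⟨by rw [degree_add_of_lt h, hpow], hmonic.pow.add_of_lt h⟩

lemma degree_orbitPoly_lt_degree (hd : 1 < d) (e : ι → ι) (a : ι → R) {k m : ℕ} (hkm : k ≤ m)
    (i : ι) :
    degLex.degree (orbitPoly d e a k i) ≺[degLex] degLex.degree (orbitPoly d e a (m + 1) i) := by
  rw [(degree_orbitPoly_succ_and_monic hd e a m i).1]
  apply degLex_lt_of_degree_lt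
  cases k with
  | zero => simpa [orbitPoly] using pow_pos (zero_lt_one.trans hd) m
  | succ k =>
    rw [(degree_orbitPoly_succ_and_monic hd e a k i).1]
    simpa using Nat.pow_lt_pow_right hd hkm

end OrbitPoly

theorem finite_setOf_eval_orbitPoly_eq {ι R : Type*} [Finite ι] [CommRing R] [IsDomain R] {d : ℕ}
    (hd : 1 < d) {e : ι → ι} (he : Function.Surjective e) (a : ι → R) {k n : ℕ} (hkn : k < n) :
    {x : ι → R | ∀ i, eval x (orbitPoly d e a n i) = eval x (orbitPoly d e a k i)}.Finite := by
  let _ : LinearOrder ι := IsWellOrder.linearOrder WellOrderingRel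
  obtain ⟨m, rfl⟩ := Nat.exists_eq_add_one_of_ne_zero (Nat.ne_zero_of_lt hkn)
  obtain ⟨s, hs⟩ := (he.iterate m).hasRightInverse
  have hlt (j : ι) := degree_orbitPoly_lt_degree hd e a (Nat.lt_succ_iff.mp hkn) (s j)
  have hlead (j : ι) := degree_orbitPoly_succ_and_monic hd e a m (s j)
  refine (finite_setOf_eval_eq_zero_of_degree_eq_single degLex
    (P := fun j => orbitPoly d e a (m + 1) (s j) - orbitPoly d e a k (s j))
    (N := fun _ => d ^ m) (fun j => ?_) fun j => ?_).subset fun x hx j => ?_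
  · rw [leadingCoeff_sub_of_lt (hlt j), (hlead j).2.leadingCoeff_eq_one]
    exact isUnit_one
  · rw [degree_sub_of_lt (hlt j), (hlead j).1, hs]
  · rw [map_sub, hx, sub_self]

lemma eval_smul_orbitPoly {G R : Type*} [Monoid G] [CommRing R] [MulSemiringAction G R]
    {d : ℕ} {g : G} {f : R → R → R} (hf : ∀ c z, f c z = (g • z) ^ d + c) (a c : R) (m : ℕ)
    (τ : G) :
    eval (fun τ : G => τ • c) (orbitPoly d (· * g) (fun τ => τ • a) m τ) = τ • (f c)^[m] a := by
  induction m generalizing τ with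
  | zero => simp [orbitPoly]
  | succ m ih =>
    rw [orbitPoly, map_add, map_pow, eval_X, ih, Function.iterate_succ_apply', hf, smul_add,
      smul_pow', mul_smul]

theorem per_finite_antiholomorphic_general {G R : Type*} [Group G] [CommRing R] [IsDomain R]
    [MulSemiringAction G R] {g : G} (hg : IsOfFinOrder g) {d : ℕ} (hd : 1 < d)
    (f : R → R → R) (hf : ∀ c z, f c z = (g • z) ^ d + c) (a : R) {k n : ℕ} (hkn : k < n) :
    {c : R | (f c)^[n] a = (f c)^[k] a}.Finite := by
  have : Finite (Subgroup.zpowers g) := hg.finite_zpowers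
  let g' : Subgroup.zpowers g := ⟨g, Subgroup.mem_zpowers g⟩
  have conjugates_injective : Function.Injective fun (c : R) (τ : Subgroup.zpowers g) => τ • c :=
    fun c c' h => by simpa using congrFun h 1
  refine ((finite_setOf_eval_orbitPoly_eq hd (mul_right_surjective g') (fun τ => τ • a)
    hkn).preimage conjugates_injective.injOn).subset fun c hc τ => ?_
  have hf' (c z : R) : f c z = (g' • z) ^ d + c := hf c z
  dsimp only
  rw [eval_smul_orbitPoly hf', eval_smul_orbitPoly hf', hc]

/-- For the anti-holomorphic quadratic family `f_c(z) = (conj z)² + c`, and integers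
`n > k > 0`, the set `Per(n,k) = {c : f_c^[n](0) = f_c^[k](0)}` is finite; in particular
its subset `Per*(n,k)` of parameters with moreover `f_c^[n−k](0) ≠ 0` is finite. -/
theorem per_finite_antiholomorphic
    (f : ℂ → ℂ → ℂ) (hf : ∀ c z : ℂ, f c z = (starRingEnd ℂ z) ^ 2 + c)
    (n k : ℕ) (hk : 0 < k) (hkn : k < n) :
    {c : ℂ | (f c)^[n] 0 = (f c)^[k] 0}.Finite ∧
      {c : ℂ | (f c)^[n] 0 = (f c)^[k] 0 ∧ (f c)^[n - k] 0 ≠ 0}.Finite := by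
  have conj_finite_order : IsOfFinOrder (starRingAut : RingAut ℂ) :=
    isOfFinOrder_iff_pow_eq_one.mpr ⟨2, two_pos, RingEquiv.ext star_star⟩
  have h := per_finite_antiholomorphic_general conj_finite_order one_lt_two f hf 0 hkn
  exact ⟨h, h.subset fun _ hc => hc.1⟩
end

section
/- Let n > k > 1 be integers and let θ ∈ ℝ/ℤ satisfy (−2)^{n−1}·θ = (−2)^{k−1}·θ and (−2)^{n−k}·θ ≠ θ. Let α ∈ ℝ/ℤ be any angle with (−2)·α = θ. Then 4ⁿ·α = 4ᵏ·α, and α is not periodic under multiplication by 4: for every integer j ≥ 1 one has 4ʲ·α ≠ α. In particular α is strictly preperiodic under the angle-multiplication map M₄ : β ↦ 4·β. -/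
/-!
The statement is a fact about iterating a self-map `f`, here `β ↦ -2 • β`, whose second iterate is
`β ↦ 4 • β`. If `f^[n] α = f^[k] α`, then `f^[k] α` is periodic with period `n - k`. Were `α`
periodic under an iterate of `f`, it would be periodic under `f`, and every period of a point on its
cycle, in particular `n - k`, would be a period of `α` and of `f α`.
-/

open Function

section Iterate

variable {X : Type*} {f : X → X} {x : X} {m n k : ℕ}

theorem iterate_iterate_eq_of_iterate_eq (m : ℕ) (h : f^[n] x = f^[k] x) :
    (f^[m])^[n] x = (f^[m])^[k] x := by
  rw [iterate_comm f n m, iterate_comm f k m]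
  exact (Commute.iterate_iterate_self f n k).iterate_eq_of_map_eq m h

theorem periodicPts_iterate_subset (hm : 0 < m) : periodicPts f^[m] ⊆ periodicPts f := by
  rintro x ⟨j, hj, hx⟩
  exact mk_mem_periodicPts (Nat.mul_pos hm hj) (by rwa [IsPeriodicPt, iterate_mul])

theorem isPeriodicPt_sub_of_iterate_eq (hkn : k ≤ n) (hx : x ∈ periodicPts f)
    (h : f^[n] x = f^[k] x) : IsPeriodicPt f (n - k) x := by
  refine isPeriodicPt_of_mem_periodicPts_of_isPeriodicPt_iterate (n := k) hx ?_
  rwa [IsPeriodicPt, IsFixedPt, ← iterate_add_apply, Nat.sub_add_cancel hkn]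

theorem iterate_eq_of_iterate_pred_apply_eq (hk : 0 < k) (hn : 0 < n)
    (h : f^[n - 1] (f x) = f^[k - 1] (f x)) : f^[n] x = f^[k] x := by
  rwa [← iterate_succ_apply, ← iterate_succ_apply, Nat.succ_eq_add_one, Nat.succ_eq_add_one,
    Nat.sub_add_cancel hn, Nat.sub_add_cancel hk] at h

end Iterate

theorem four_pow_nsmul_eq_neg_two_sq_pow_zsmul {G : Type*} [SubNegMonoid G] (i : ℕ) (x : G) :
    (4 ^ i : ℕ) • x = (((-2 : ℤ) ^ 2) ^ i) • x := by
  rw [← natCast_zsmul, Nat.cast_pow]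
  norm_num

theorem misiurewicz_angle_transfer_deg_four_general {M X : Type*} [Monoid M] [MulAction M X]
    (a : M) {m n k : ℕ} (hm : 0 < m) (hk : 0 < k) (hkn : k < n) {θ α : X}
    (h1 : a ^ (n - 1) • θ = a ^ (k - 1) • θ) (h2 : a ^ (n - k) • θ ≠ θ) (hα : a • α = θ) :
    (a ^ m) ^ n • α = (a ^ m) ^ k • α ∧ ∀ j : ℕ, 1 ≤ j → (a ^ m) ^ j • α ≠ α := by
  subst hα
  simp only [← smul_iterate_apply] at h1
  have hpre : (a • ·)^[n] α = (a • ·)^[k] α :=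
    iterate_eq_of_iterate_pred_apply_eq hk (hk.trans hkn) h1
  constructor
  · simpa only [smul_iterate] using iterate_iterate_eq_of_iterate_eq m hpre
  · intro j hj hfix
    have hper : α ∈ periodicPts ((a • ·) : X → X) := by
      refine periodicPts_iterate_subset hm (mk_mem_periodicPts hj ?_)
      rwa [smul_iterate, MulAction.isPeriodicPt_smul_iff]
    have hperiod : IsPeriodicPt (a • ·) (n - k) (a • α) :=
      (isPeriodicPt_sub_of_iterate_eq hkn.le hper hpre).apply
    exact h2 (MulAction.isPeriodicPt_smul_iff.mp hperiod)

/-- Transfer of the Misiurewicz property from the degree `−2` angle map to the degree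
`4` angle map: if `θ ∈ ℝ/ℤ` satisfies `(−2)^(n−1)·θ = (−2)^(k−1)·θ` and
`(−2)^(n−k)·θ ≠ θ` for integers `n > k > 1`, and `α ∈ ℝ/ℤ` satisfies `(−2)·α = θ`, then
`4ⁿ·α = 4ᵏ·α` and `4ʲ·α ≠ α` for every `j ≥ 1`; i.e. `α` is strictly preperiodic under
`M₄ : β ↦ 4β`. -/
theorem misiurewicz_angle_transfer_deg_four
    (n k : ℕ) (hk : 1 < k) (hkn : k < n) (θ α : UnitAddCircle)
    (h1 : ((-2 : ℤ) ^ (n - 1)) • θ = ((-2 : ℤ) ^ (k - 1)) • θ)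
    (h2 : ((-2 : ℤ) ^ (n - k)) • θ ≠ θ)
    (hα : (-2 : ℤ) • α = θ) :
    ((4 : ℕ) ^ n) • α = ((4 : ℕ) ^ k) • α ∧
      ∀ j : ℕ, 1 ≤ j → ((4 : ℕ) ^ j) • α ≠ α := by
  simpa only [four_pow_nsmul_eq_neg_two_sq_pow_zsmul] using
    misiurewicz_angle_transfer_deg_four_general (-2 : ℤ) two_pos (Nat.zero_lt_of_lt hk) hkn
      h1 h2 hα
end
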